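/- arXiv:1812.02267 — 4 statements merged into one kernel-verified Lean document; each statement's English description precedes it below -/
import Mathlib

section
/- Let β ∈ ℝ, let a, b, c, d ∈ (0,∞) with a < b and c < d, and let p ∈ [1,∞). Let f be a non-negative measurable function on (0,∞). Then (∫_a^b (∫_{x+c}^{x+d} x^β f(y) dy)^p dx)^{1/p} ≤ C (∫_{a+c}^{b+d} (f(x) x^{β+1})^p dx)^{1/p}, where C = ∫_{1+c/b}^{1+d/a} t^{-(β+1+1/p)} dt. -/
open MeasureTheory
open scoped ENNReal

lemma lint_scale (x : ℝ) (hx : 0 < x) (g : ℝ → ℝ≥0∞) (hg : Measurable g) :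
    ∫⁻ y, g y = ENNReal.ofReal x * ∫⁻ t, g (x * t) := by
  conv_lhs => rw [← Real.smul_map_volume_mul_left hx.ne']
  rw [lintegral_smul_measure, lintegral_map hg (by fun_prop), abs_of_pos hx, smul_eq_mul]

lemma jensen_aux {ν : Measure ℝ} (p : ℝ) (hp : 1 ≤ p) (F w : ℝ → ℝ≥0∞) (hF : Measurable F)
    (hw : Measurable w) (h0 : ∀ᵐ t ∂ν, w t ≠ 0 ∧ w t ≠ ⊤) :
    (∫⁻ t, F t ∂ν) ^ p ≤ (∫⁻ t, w t ∂ν) ^ (p - 1) * ∫⁻ t, w t ^ (1 - p) * F t ^ p ∂ν := by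
  rcases hp.eq_or_lt with rfl | hp1
  · simp
  have hp0 : 0 < p := by linarith
  have hpq := Real.HolderConjugate.conjExponent hp1
  set q := Real.conjExponent p with hq
  have hq0 : 0 < q := hpq.symm.pos
  have hqv : q = p / (p - 1) := rfl
  have hpm : p - 1 ≠ 0 := by linarith
  have hinv : (1 / q) * p = p - 1 := by rw [hqv]; field_simp
  have H := ENNReal.lintegral_mul_le_Lp_mul_Lq ν hpq
    (f := fun t => w t ^ (-(1 / q)) * F t) (g := fun t => w t ^ (1 / q))
    (by fun_prop) (by fun_prop)
  have e1 : ∫⁻ t, ((fun t => w t ^ (-(1 / q)) * F t) * fun t => w t ^ (1 / q)) t ∂ν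
      = ∫⁻ t, F t ∂ν := by
    apply lintegral_congr_ae
    filter_upwards [h0] with t ht
    simp only [Pi.mul_apply]
    rw [mul_right_comm, ← ENNReal.rpow_add _ _ ht.1 ht.2]
    simp
  have e2 : ∀ t, (w t ^ (-(1 / q)) * F t) ^ p = w t ^ (1 - p) * F t ^ p := by
    intro t
    rw [ENNReal.mul_rpow_of_nonneg _ _ hp0.le, ← ENNReal.rpow_mul]
    congr 2
    linarith
  have e3 : ∀ t, (w t ^ (1 / q)) ^ q = w t := by
    intro t
    rw [← ENNReal.rpow_mul, one_div_mul_cancel hq0.ne', ENNReal.rpow_one]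
  rw [e1] at H
  simp only [e2, e3] at H
  calc _ ≤ _ := ENNReal.rpow_le_rpow H hp0.le
    _ = _ := by
      rw [ENNReal.mul_rpow_of_nonneg _ _ hp0.le, ← ENNReal.rpow_mul, ← ENNReal.rpow_mul, hinv,
        one_div_mul_cancel hp0.ne', ENNReal.rpow_one, mul_comm]

/-- **Hardy-type inequality.** Let `β ∈ ℝ`, `a, b, c, d ∈ (0,∞)` with
`a < b`, `c < d`, and `p ∈ [1,∞)`. For every non-negative measurable `f` on `(0,∞)`,
`(∫_a^b (∫_{x+c}^{x+d} x^β f(y) dy)^p dx)^{1/p}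
  ≤ C (∫_{a+c}^{b+d} (f(x) x^{β+1})^p dx)^{1/p}`,
where `C = ∫_{1+c/b}^{1+d/a} t^{-(β+1+1/p)} dt`.  Both sides are interpreted in `ℝ≥0∞`
via Lebesgue integrals. -/
theorem stmt_0 (β : ℝ) (a b c d : ℝ) (ha : 0 < a) (hb : 0 < b) (hc : 0 < c) (hd : 0 < d)
    (hab : a < b) (hcd : c < d) (p : ℝ) (hp : 1 ≤ p)
    (f : ℝ → ℝ) (hf : Measurable f) (hf0 : ∀ x ∈ Set.Ioi (0 : ℝ), 0 ≤ f x) :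
    (∫⁻ x in Set.Ioo a b,
        (∫⁻ y in Set.Ioo (x + c) (x + d),
          ENNReal.ofReal (x ^ β) * ENNReal.ofReal (f y)) ^ p) ^ (1 / p) ≤
      ENNReal.ofReal (∫ t in Set.Ioo (1 + c / b) (1 + d / a), t ^ (-(β + 1 + 1 / p))) *
        (∫⁻ x in Set.Ioo (a + c) (b + d),
          ENNReal.ofReal (f x * x ^ (β + 1)) ^ p) ^ (1 / p) := by
  have hp0 : 0 < p := by linarith
  set I := Set.Ioo a b with hI
  set T := Set.Ioo (1 + c / b) (1 + d / a) with hT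
  set w : ℝ → ℝ≥0∞ := fun t => ENNReal.ofReal (t ^ (-(β + 1 + 1 / p))) with hw
  have hwm : Measurable w := by fun_prop
  have hTpos : ∀ t ∈ T, 0 < t := fun t ht => by
    have : 0 < c / b := by positivity
    linarith [ht.1]
  have hC : ENNReal.ofReal (∫ t in T, t ^ (-(β + 1 + 1 / p))) = ∫⁻ t in T, w t := by
    apply ofReal_integral_eq_lintegral_ofReal
    · apply IntegrableOn.mono_set (t := Set.Icc (1 + c / b) (1 + d / a)) _ Set.Ioo_subset_Icc_self
      apply ContinuousOn.integrableOn_Icc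
      intro t ht
      have : 0 < c / b := by positivity
      exact (Real.continuousAt_rpow_const _ _ (Or.inl (by linarith [ht.1]))).continuousWithinAt
    · filter_upwards [ae_restrict_mem measurableSet_Ioo] with t ht
      exact Real.rpow_nonneg (hTpos t ht).le _
  rw [hC]
  set C := ∫⁻ t in T, w t with hCdef
  set B := ∫⁻ x in Set.Ioo (a + c) (b + d), ENNReal.ofReal (f x * x ^ (β + 1)) ^ p with hB
  let S : Set (ℝ × ℝ) := {q | q.1 + c < q.1 * q.2 ∧ q.1 * q.2 < q.1 + d}
  have hS : MeasurableSet S :=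
    MeasurableSet.inter
      (s₁ := {q : ℝ × ℝ | q.1 + c < q.1 * q.2}) (s₂ := {q : ℝ × ℝ | q.1 * q.2 < q.1 + d})
      (measurableSet_lt (by fun_prop) (by fun_prop))
      (measurableSet_lt (by fun_prop) (by fun_prop))
  let F : ℝ × ℝ → ℝ≥0∞ := S.indicator
    (fun q => ENNReal.ofReal q.1 * (ENNReal.ofReal (q.1 ^ β) * ENNReal.ofReal (f (q.1 * q.2))))
  have hF : Measurable F := Measurable.indicator (by fun_prop) hS
  -- change of variables in the inner integral
  have h1 : ∀ x ∈ I, ∫⁻ y in Set.Ioo (x + c) (x + d),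
      ENNReal.ofReal (x ^ β) * ENNReal.ofReal (f y) = ∫⁻ t in T, F (x, t) := by
    intro x hx
    have hx0 : 0 < x := ha.trans hx.1
    have hgm : Measurable ((Set.Ioo (x + c) (x + d)).indicator
        (fun y => ENNReal.ofReal (x ^ β) * ENNReal.ofReal (f y))) :=
      Measurable.indicator (by fun_prop) measurableSet_Ioo
    rw [← lintegral_indicator measurableSet_Ioo, lint_scale x hx0 _ hgm,
      ← lintegral_indicator measurableSet_Ioo, ← lintegral_const_mul _ (by fun_prop)]
    apply lintegral_congr
    intro t
    by_cases h : x + c < x * t ∧ x * t < x + d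
    · have hS' : (x, t) ∈ S := h
      have hT' : t ∈ T := by
        constructor
        · have : c / b < c / x := div_lt_div_of_pos_left hc hx0 hx.2
          have h2 : 1 + c / x < t := by
            rw [← mul_lt_mul_iff_right₀ hx0, mul_add, mul_div_cancel₀ _ hx0.ne']; linarith [h.1]
          linarith
        · have : d / x < d / a := div_lt_div_of_pos_left hd ha hx.1
          have h2 : t < 1 + d / x := by
            rw [← mul_lt_mul_iff_right₀ hx0, mul_add, mul_div_cancel₀ _ hx0.ne']; linarith [h.2]
          linarith
      have hI' : x * t ∈ Set.Ioo (x + c) (x + d) := h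
      rw [Set.indicator_of_mem hI', Set.indicator_of_mem hT']
      simp only [F]
      rw [Set.indicator_of_mem hS']
    · have hS' : (x, t) ∉ S := h
      have hI' : x * t ∉ Set.Ioo (x + c) (x + d) := h
      rw [Set.indicator_of_notMem hI', mul_zero]
      have : F (x, t) = 0 := Set.indicator_of_notMem hS' _
      by_cases ht : t ∈ T
      · rw [Set.indicator_of_mem ht, this]
      · rw [Set.indicator_of_notMem ht]
  have hw0 : ∀ t ∈ T, w t ≠ 0 ∧ w t ≠ ⊤ := fun t ht =>
    ⟨by simpa [hw] using Real.rpow_pos_of_pos (hTpos t ht) _, ENNReal.ofReal_ne_top⟩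
  -- estimate in x for fixed t
  have h2 : ∀ t ∈ T, ∫⁻ x in I, F (x, t) ^ p ≤ w t ^ p * B := by
    intro t ht
    have ht0 := hTpos t ht
    let φ : ℝ → ℝ≥0∞ := (Set.Ioo (a + c) (b + d)).indicator
      (fun u => ENNReal.ofReal (f u * u ^ (β + 1)) ^ p)
    have hφ : Measurable φ := Measurable.indicator (by fun_prop) measurableSet_Ioo
    have hφB : B = ENNReal.ofReal t * ∫⁻ x, φ (t * x) := by
      rw [← lint_scale t ht0 φ hφ, hB, ← lintegral_indicator measurableSet_Ioo]
    have hwp : w t ^ p * ENNReal.ofReal t = ENNReal.ofReal (t ^ (-(β + 1))) ^ p := by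
      simp only [hw]
      rw [ENNReal.ofReal_rpow_of_pos (by positivity), ENNReal.ofReal_rpow_of_pos (by positivity),
        ← ENNReal.ofReal_mul (by positivity), ← Real.rpow_mul ht0.le, ← Real.rpow_mul ht0.le]
      congr 1
      nth_rewrite 2 [← Real.rpow_one t]
      rw [← Real.rpow_add ht0]
      congr 1
      field_simp
      ring
    rw [hφB, ← mul_assoc, hwp, ← lintegral_const_mul _ (by fun_prop)]
    refine le_trans ?_ (setLIntegral_le_lintegral I _)
    apply setLIntegral_mono' measurableSet_Ioo
    intro x hx
    have hx0 : 0 < x := ha.trans hx.1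
    by_cases h : (x, t) ∈ S
    · have hF' : F (x, t) = ENNReal.ofReal x * (ENNReal.ofReal (x ^ β) *
        ENNReal.ofReal (f (x * t))) := Set.indicator_of_mem h _
      have hm : t * x ∈ Set.Ioo (a + c) (b + d) := by
        have h1 : x + c < x * t := h.1
        have h2 : x * t < x + d := h.2
        constructor <;> linarith [hx.1, hx.2]
      have hφ' : φ (t * x) = ENNReal.ofReal (f (t * x) * (t * x) ^ (β + 1)) ^ p :=
        Set.indicator_of_mem hm _
      rw [hF', hφ', ← ENNReal.mul_rpow_of_nonneg _ _ hp0.le, ← ENNReal.ofReal_mul (by positivity),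
        ← ENNReal.ofReal_mul (by positivity), ← ENNReal.ofReal_mul (by positivity)]
      apply le_of_eq
      congr 2
      rw [Real.mul_rpow ht0.le hx0.le, Real.rpow_neg ht0.le, Real.rpow_add_one hx0.ne',
        mul_comm t x]
      have : t ^ (β + 1) ≠ 0 := (Real.rpow_pos_of_pos ht0 _).ne'
      field_simp
    · have hF' : F (x, t) = 0 := Set.indicator_of_notMem h _
      rw [hF', ENNReal.zero_rpow_of_pos hp0]
      exact zero_le
  have key : ∫⁻ x in I, (∫⁻ y in Set.Ioo (x + c) (x + d),
      ENNReal.ofReal (x ^ β) * ENNReal.ofReal (f y)) ^ p ≤ C ^ p * B := by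
    calc _ = ∫⁻ x in I, (∫⁻ t in T, F (x, t)) ^ p :=
          setLIntegral_congr_fun measurableSet_Ioo (fun x hx => by simp only [h1 x hx])
      _ ≤ ∫⁻ x in I, C ^ (p - 1) * ∫⁻ t in T, w t ^ (1 - p) * F (x, t) ^ p := by
          apply lintegral_mono
          intro x
          refine jensen_aux p hp (fun t => F (x, t)) w (by fun_prop) hwm ?_
          filter_upwards [ae_restrict_mem measurableSet_Ioo] with t ht using hw0 t ht
      _ = C ^ (p - 1) * ∫⁻ x in I, ∫⁻ t in T, w t ^ (1 - p) * F (x, t) ^ p :=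
          lintegral_const_mul _ (Measurable.lintegral_prod_right' 
            (f := fun q : ℝ × ℝ => w q.2 ^ (1 - p) * F q ^ p) (by fun_prop))
      _ = C ^ (p - 1) * ∫⁻ t in T, ∫⁻ x in I, w t ^ (1 - p) * F (x, t) ^ p := by
          rw [lintegral_lintegral_swap]
          have : Measurable (fun q : ℝ × ℝ => w q.2 ^ (1 - p) * F q ^ p) := by fun_prop
          exact this.aemeasurable
      _ ≤ C ^ (p - 1) * ∫⁻ t in T, w t * B := by
          refine mul_le_mul_right ?_ _
          apply setLIntegral_mono' measurableSet_Ioo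
          intro t ht
          rw [lintegral_const_mul _ (by fun_prop)]
          calc _ ≤ w t ^ (1 - p) * (w t ^ p * B) := by gcongr; exact h2 t ht
            _ = _ := by
              rw [← mul_assoc, ← ENNReal.rpow_add _ _ (hw0 t ht).1 (hw0 t ht).2]
              simp
      _ = C ^ p * B := by
          rw [lintegral_mul_const _ hwm, ← hCdef, ← mul_assoc]
          congr 1
          nth_rewrite 2 [← ENNReal.rpow_one C]
          rw [← ENNReal.rpow_add_of_nonneg _ _ (by linarith) zero_le_one]
          simp
  calc _ ≤ (C ^ p * B) ^ (1 / p) := ENNReal.rpow_le_rpow key (by positivity)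
    _ = _ := by
      rw [ENNReal.mul_rpow_of_nonneg _ _ (by positivity), ← ENNReal.rpow_mul,
        mul_one_div_cancel hp0.ne', ENNReal.rpow_one]
end

section
/- Let β > -1/p with p ∈ [1,∞), and let f be a non-negative measurable function on (0,∞). Then (∫_0^∞ (∫_x^∞ x^β f(y) dy)^p dx)^{1/p} ≤ (p/(βp+1)) (∫_0^∞ (f(x) x^{β+1})^p dx)^{1/p}. -/
open MeasureTheory
open scoped ENNReal

lemma hardy_tail (a x : ℝ) (ha : 0 < a) (hx : 0 < x) :
    ∫⁻ y in Set.Ioi x, ENNReal.ofReal (y ^ (-1 - a)) = ENNReal.ofReal (x ^ (-a) / a) := by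
  rw [← ofReal_integral_eq_lintegral_ofReal]
  · rw [integral_Ioi_rpow_of_lt (by linarith) hx]
    congr 1
    rw [show -1 - a + 1 = -a by ring]
    field_simp
  · exact integrableOn_Ioi_rpow_of_lt (by linarith) hx
  · filter_upwards [ae_restrict_mem measurableSet_Ioi] with y hy
    exact Real.rpow_nonneg (hx.trans hy).le _

lemma hardy_head (a y : ℝ) (ha : 0 < a) (hy : 0 < y) :
    ∫⁻ x in Set.Ioo 0 y, ENNReal.ofReal (x ^ (a - 1)) = ENNReal.ofReal (y ^ a / a) := by
  rw [setLIntegral_congr Ioo_ae_eq_Ioc, ← ofReal_integral_eq_lintegral_ofReal]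
  · rw [← intervalIntegral.integral_of_le hy.le, integral_rpow (Or.inl (by linarith))]
    congr 1
    rw [show a - 1 + 1 = a by ring, Real.zero_rpow ha.ne']
    simp
  · have := intervalIntegral.intervalIntegrable_rpow' (a := 0) (b := y) (r := a - 1) (by linarith)
    exact (intervalIntegrable_iff_integrableOn_Ioc_of_le hy.le).1 this
  · filter_upwards [ae_restrict_mem measurableSet_Ioc] with x hx
    exact Real.rpow_nonneg hx.1.le _

lemma hardy_jensen {μ : Measure ℝ} (p : ℝ) (hp : 1 ≤ p) (g : ℝ → ℝ≥0∞) (hg : Measurable g) :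
    (∫⁻ y, g y ∂μ) ^ p ≤ (μ Set.univ) ^ (p - 1) * ∫⁻ y, g y ^ p ∂μ := by
  have h := eLpNorm'_le_eLpNorm'_mul_rpow_measure_univ (μ := μ) (f := g) one_pos hp
    hg.aestronglyMeasurable
  have hp0 : 0 < p := by linarith
  simp only [eLpNorm', enorm_eq_self, ENNReal.rpow_one, div_one] at h
  have h2 := ENNReal.rpow_le_rpow h hp0.le
  rw [ENNReal.mul_rpow_of_nonneg _ _ hp0.le, ← ENNReal.rpow_mul, ← ENNReal.rpow_mul,
    one_div_mul_cancel hp0.ne', ENNReal.rpow_one, mul_comm,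
    show (1 - 1 / p) * p = p - 1 by field_simp] at h2
  exact h2

lemma hardy_swap (K H : ℝ → ℝ≥0∞) (hK : Measurable K) (hH : Measurable H) :
    ∫⁻ x in Set.Ioi (0:ℝ), ∫⁻ y in Set.Ioi x, K x * H y =
      ∫⁻ y in Set.Ioi (0:ℝ), H y * ∫⁻ x in Set.Ioo 0 y, K x := by
  let S : Set (ℝ × ℝ) := {q | q.1 < q.2}
  have hS : MeasurableSet S := measurableSet_lt measurable_fst measurable_snd
  let F : ℝ × ℝ → ℝ≥0∞ := S.indicator (fun q => K q.1 * H q.2)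
  have hF : Measurable F :=
    ((hK.comp measurable_fst).mul (hH.comp measurable_snd)).indicator hS
  have e1 : ∫⁻ x in Set.Ioi (0:ℝ), ∫⁻ y in Set.Ioi x, K x * H y =
      ∫⁻ x in Set.Ioi (0:ℝ), ∫⁻ y in Set.Ioi (0:ℝ), F (x, y) := by
    refine setLIntegral_congr_fun measurableSet_Ioi fun x hx => ?_
    have : (fun y => F (x, y)) = (Set.Ioi x).indicator (fun y => K x * H y) := by
      ext y; simp [F, S, Set.indicator]
    simp only [this]
    rw [setLIntegral_indicator measurableSet_Ioi, Set.inter_eq_left.2]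
    exact Set.Ioi_subset_Ioi (le_of_lt hx)
  rw [e1, lintegral_lintegral_swap (f := fun x y => F (x, y)) hF.aemeasurable]
  refine setLIntegral_congr_fun measurableSet_Ioi fun y hy => ?_
  have : (fun x => F (x, y)) = (Set.Iio y).indicator (fun x => H y * K x) := by
    ext x; simp [F, S, Set.indicator, mul_comm]
  simp only [this]
  rw [setLIntegral_indicator measurableSet_Iio, ← lintegral_const_mul _ hK, Set.inter_comm,
    Set.Ioi_inter_Iio]

/-- **classical Hardy inequality.** Let `β > -1/p` with `p ∈ [1,∞)`, and let
`f` be a non-negative measurable function on `(0,∞)`.  Then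
`(∫_0^∞ (∫_x^∞ x^β f(y) dy)^p dx)^{1/p} ≤ (p/(βp+1)) (∫_0^∞ (f(x) x^{β+1})^p dx)^{1/p}`,
both sides interpreted in `ℝ≥0∞` via Lebesgue integrals. -/
theorem stmt_1 (p β : ℝ) (hp : 1 ≤ p) (hβ : -(1 / p) < β)
    (f : ℝ → ℝ) (hf : Measurable f) (hf0 : ∀ x ∈ Set.Ioi (0 : ℝ), 0 ≤ f x) :
    (∫⁻ x in Set.Ioi (0 : ℝ),
        (∫⁻ y in Set.Ioi x, ENNReal.ofReal (x ^ β) * ENNReal.ofReal (f y)) ^ p) ^ (1 / p) ≤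
      ENNReal.ofReal (p / (β * p + 1)) *
        (∫⁻ x in Set.Ioi (0 : ℝ), ENNReal.ofReal (f x * x ^ (β + 1)) ^ p) ^ (1 / p) := by
  have hp0 : 0 < p := by linarith
  obtain ⟨a, ha⟩ : ∃ a, a = β + 1 / p := ⟨_, rfl⟩
  have ha0 : 0 < a := by linarith
  have hap : a * p = β * p + 1 := by rw [ha]; field_simp
  have hC : p / (β * p + 1) = a⁻¹ := by rw [← hap]; field_simp
  rw [hC]
  have hinv : 0 < a⁻¹ := inv_pos.2 ha0
  let g : ℝ → ℝ≥0∞ := fun y => ENNReal.ofReal (f y * y ^ (1 + a))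
  let w : ℝ → ℝ≥0∞ := fun y => ENNReal.ofReal (y ^ (-1 - a))
  have hg : Measurable g := by fun_prop
  have hw : Measurable w := by fun_prop
  let K : ℝ → ℝ≥0∞ := fun x => ENNReal.ofReal (a⁻¹ ^ (p - 1)) * ENNReal.ofReal (x ^ (a - 1))
  let H : ℝ → ℝ≥0∞ := fun y => w y * g y ^ p
  have hK : Measurable K := by fun_prop
  have hH : Measurable H := by fun_prop
  have key : ∫⁻ x in Set.Ioi (0 : ℝ),
        (∫⁻ y in Set.Ioi x, ENNReal.ofReal (x ^ β) * ENNReal.ofReal (f y)) ^ p ≤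
      ENNReal.ofReal a⁻¹ ^ p *
        ∫⁻ x in Set.Ioi (0 : ℝ), ENNReal.ofReal (f x * x ^ (β + 1)) ^ p := by
    calc _ ≤ ∫⁻ x in Set.Ioi (0:ℝ), ∫⁻ y in Set.Ioi x, K x * H y := by
          refine setLIntegral_mono' measurableSet_Ioi fun x hx => ?_
          have hx : 0 < x := hx
          rw [lintegral_const_mul _ (by fun_prop), lintegral_const_mul _ hH,
            ENNReal.mul_rpow_of_nonneg _ _ hp0.le]
          have e : ∫⁻ y in Set.Ioi x, ENNReal.ofReal (f y) =
              ∫⁻ y, g y ∂((volume.restrict (Set.Ioi x)).withDensity w) := by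
            rw [lintegral_withDensity_eq_lintegral_mul _ hw hg]
            refine setLIntegral_congr_fun measurableSet_Ioi fun y hy => ?_
            have hy : 0 < y := hx.trans hy
            simp only [g, w, Pi.mul_apply]
            rw [← ENNReal.ofReal_mul (Real.rpow_nonneg hy.le _)]
            congr 1
            rw [mul_left_comm, ← Real.rpow_add hy]
            simp
          have hj := hardy_jensen (μ := (volume.restrict (Set.Ioi x)).withDensity w) p hp g hg
          rw [← e, withDensity_apply _ MeasurableSet.univ, Measure.restrict_univ,
            hardy_tail a x ha0 hx,
            lintegral_withDensity_eq_lintegral_mul _ hw (by fun_prop)] at hj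
          refine (mul_le_mul_right hj _).trans (le_of_eq ?_)
          rw [← mul_assoc]
          congr 1
          simp only [K]
          have h1 := Real.rpow_pos_of_pos hx β
          have h2 := Real.rpow_pos_of_pos hx (-a)
          rw [ENNReal.ofReal_rpow_of_pos h1, ENNReal.ofReal_rpow_of_pos (by positivity),
            ← ENNReal.ofReal_mul (by positivity), ← ENNReal.ofReal_mul (by positivity)]
          congr 1
          rw [div_eq_mul_inv, Real.mul_rpow h2.le hinv.le, ← Real.rpow_mul hx.le,
            ← Real.rpow_mul hx.le, ← mul_assoc, ← Real.rpow_add hx, mul_comm]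
          congr 2
          linarith
      _ = ∫⁻ y in Set.Ioi (0:ℝ), H y * ∫⁻ x in Set.Ioo 0 y, K x := hardy_swap K H hK hH
      _ = ∫⁻ y in Set.Ioi (0:ℝ),
            ENNReal.ofReal a⁻¹ ^ p * ENNReal.ofReal (f y * y ^ (β + 1)) ^ p := by
          refine setLIntegral_congr_fun measurableSet_Ioi fun y hy => ?_
          have hfy := hf0 y hy
          have hy : 0 < y := hy
          have h3 := fun s : ℝ => (Real.rpow_pos_of_pos hy s).le
          simp only [K, H, g, w]
          rw [lintegral_const_mul _ (by fun_prop), hardy_head a y ha0 hy,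
            ENNReal.ofReal_rpow_of_pos hinv,
            ENNReal.ofReal_rpow_of_nonneg (mul_nonneg hfy (h3 _)) hp0.le,
            ENNReal.ofReal_rpow_of_nonneg (mul_nonneg hfy (h3 _)) hp0.le,
            ← ENNReal.ofReal_mul (by positivity), ← ENNReal.ofReal_mul (by positivity),
            ← ENNReal.ofReal_mul (by positivity), ← ENNReal.ofReal_mul (by positivity)]
          congr 1
          rw [Real.mul_rpow hfy (h3 _), Real.mul_rpow hfy (h3 _), ← Real.rpow_mul hy.le,
            ← Real.rpow_mul hy.le]
          have e1 : a⁻¹ ^ p = a⁻¹ ^ (p - 1) * a⁻¹ := by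
            rw [← Real.rpow_add_one hinv.ne']; simp
          have e2 : y ^ ((β + 1) * p) = y ^ (-1 - a) * y ^ ((1 + a) * p) * y ^ a := by
            rw [← Real.rpow_add hy, ← Real.rpow_add hy]
            congr 1
            linarith
          rw [e1, e2]
          ring
      _ = _ := lintegral_const_mul _ (by fun_prop)
  refine (ENNReal.rpow_le_rpow key (by positivity)).trans (le_of_eq ?_)
  rw [ENNReal.mul_rpow_of_nonneg _ _ (by positivity), ← ENNReal.rpow_mul,
    mul_one_div_cancel hp0.ne', ENNReal.rpow_one]
end

section
/- For every real number α > 0, the series ∑_{k=0}^∞ α(α + 2) / (2((k+1)α + 1)²) converges and ∑_{k=0}^∞ α(α + 2) / (2((k+1)α + 1)²) ≤ π²/4. -/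
/-- For every real `α > 0`, the series `∑_{k=0}^∞ α(α+2)/(2((k+1)α+1)²)`
converges and its sum is at most `π²/4`. -/
theorem stmt_8 (α : ℝ) (hα : 0 < α) :
    Summable (fun k : ℕ => α * (α + 2) / (2 * (((k : ℝ) + 1) * α + 1) ^ 2)) ∧
      ∑' k : ℕ, α * (α + 2) / (2 * (((k : ℝ) + 1) * α + 1) ^ 2) ≤ Real.pi ^ 2 / 4 := by
  have h0 : ∀ k : ℕ, 0 ≤ α * (α + 2) / (2 * (((k : ℝ) + 1) * α + 1) ^ 2) := by
    intro k
    positivity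
  have h1 : ∀ n : ℕ, ∑ k ∈ Finset.range n, α * (α + 2) / (2 * (((k : ℝ) + 1) * α + 1) ^ 2)
      ≤ 1 - (α + 2) / ((2 * (n : ℝ) + 1) * α + 2) := by
    intro n
    induction n with
    | zero =>
      have : α + 2 ≠ 0 := by positivity
      simp [div_self this]
    | succ n ih =>
      rw [Finset.sum_range_succ]
      have key : α * (α + 2) / (2 * (((n : ℝ) + 1) * α + 1) ^ 2)
          ≤ (α + 2) / ((2 * (n : ℝ) + 1) * α + 2)
            - (α + 2) / ((2 * ((n + 1 : ℕ) : ℝ) + 1) * α + 2) := by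
        push_cast
        rw [div_sub_div _ _ (by positivity) (by positivity)]
        have e : (α + 2) * ((2 * ((n : ℝ) + 1) + 1) * α + 2)
            - ((2 * (n : ℝ) + 1) * α + 2) * (α + 2) = 2 * (α * (α + 2)) := by ring
        rw [e, div_le_div_iff₀ (by positivity) (by positivity)]
        have h : 0 ≤ α * (α + 2) * α ^ 2 := by positivity
        nlinarith [h]
      linarith
  have h2 : ∀ n : ℕ, ∑ k ∈ Finset.range n, α * (α + 2) / (2 * (((k : ℝ) + 1) * α + 1) ^ 2)
      ≤ 1 := by
    intro n
    have : 0 ≤ (α + 2) / ((2 * (n : ℝ) + 1) * α + 2) := by positivity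
    linarith [h1 n]
  refine ⟨summable_of_sum_range_le h0 h2, ?_⟩
  have h3 := Real.tsum_le_of_sum_range_le h0 h2
  nlinarith [Real.pi_gt_three]
end

section
/- Let {U_i}_{i ∈ I} be a family of open subsets of ℝⁿ such that each U_i has the ε-ball property for some fixed ε > 0, and such that no point of ℝⁿ is contained in more than N of the sets U_i. Then for every δ > 0 there exists ξ ∈ ℕ depending only on n, ε, N and δ such that every open ball B of radius r < δ satisfies #{i ∈ I : B ∩ U_i ≠ ∅} ≤ ξ. -/
/-- Let `{U_i}` be a family of open subsets of `ℝⁿ`, each with the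
`ε`-ball property, with overlap bounded by `N`.  Then for every `δ > 0` there is `ξ ∈ ℕ`,
depending only on `n`, `ε`, `N` and `δ`, such that every open ball of radius `r < δ`
meets at most `ξ` of the sets `U_i`. -/
theorem stmt_14 (n : ℕ) (ε : ℝ) (hε : 0 < ε) (N : ℕ) (δ : ℝ) (hδ : 0 < δ) :
    ∃ ξ : ℕ, ∀ (ι : Type) (U : ι → Set (EuclideanSpace ℝ (Fin n))),
      (∀ i, IsOpen (U i)) →
      (∀ i, ∀ x ∈ U i, ∃ c, x ∈ Metric.ball c ε ∧ Metric.ball c ε ⊆ U i) →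
      (∀ x : EuclideanSpace ℝ (Fin n), {i : ι | x ∈ U i}.encard ≤ N) →
      ∀ (z : EuclideanSpace ℝ (Fin n)) (r : ℝ), r < δ →
        {i : ι | (Metric.ball z r ∩ U i).Nonempty}.encard ≤ ξ := by
  obtain ⟨t, -, htf, ht⟩ := (isCompact_closedBall
    (0 : EuclideanSpace ℝ (Fin n)) (δ + ε)).finite_cover_balls hε
  refine ⟨htf.toFinset.card * N, ?_⟩
  intro ι U _ hball hN z r hr
  have key : ∀ s : Finset (EuclideanSpace ℝ (Fin n)),
      {i : ι | ∃ p ∈ s, z + p ∈ U i}.encard ≤ ((s.card * N : ℕ) : ℕ∞) := by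
    classical
    intro s
    induction s using Finset.induction_on with
    | empty => simp
    | insert a s ha ih =>
      have h : {i : ι | ∃ p ∈ insert a s, z + p ∈ U i} =
          {i : ι | z + a ∈ U i} ∪ {i : ι | ∃ p ∈ s, z + p ∈ U i} := by
        ext i; simp
      rw [h, Finset.card_insert_of_notMem ha]
      refine (Set.encard_union_le _ _).trans ((add_le_add (hN _) ih).trans ?_)
      norm_cast
      apply le_of_eq
      ring
  refine (Set.encard_le_encard ?_).trans (key htf.toFinset)
  rintro i ⟨x, hxz, hxU⟩
  obtain ⟨c, hxc, hc⟩ := hball i x hxU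
  rw [Metric.mem_ball] at hxz hxc
  have hcz : c - z ∈ Metric.closedBall (0 : EuclideanSpace ℝ (Fin n)) (δ + ε) := by
    rw [mem_closedBall_zero_iff, ← dist_eq_norm]
    have := dist_triangle c x z
    rw [dist_comm c x] at this
    linarith
  have h2 := ht hcz
  simp only [Set.mem_iUnion] at h2
  obtain ⟨p, hp, hcp⟩ := h2
  refine ⟨p, htf.mem_toFinset.2 hp, hc ?_⟩
  rw [Metric.mem_ball, dist_eq_norm] at hcp
  rw [Metric.mem_ball, dist_comm, dist_eq_norm]
  rwa [← sub_sub]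
end
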